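/- For every closed term M of Λ⊕, the judgment M ⇓n ⟦M⟧n holds: the call-by-name small-step semantics of M is itself derivable in the coinductive call-by-name big-step semantics. -/

import Mathlib

open scoped ENNReal

/-- Terms of Λ⊕ (and of Λ⊕⁺), in de Bruijn notation: variables, abstractions,
applications and binary (probabilistic) sums.  De Bruijn indices realize
"terms up to renaming of bound variables". -/
inductive Term : Type
  | var : ℕ → Term
  | lam : Term → Term
  | app : Term → Term → Term
  | choice : Term → Term → Term
  deriving DecidableEq

namespace Term

/-- Values: variables and abstractions. -/
inductive IsValue : Term → Prop
  | var (n : ℕ) : IsValue (var n)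
  | lam (M : Term) : IsValue (lam M)

/-- Boolean value test. -/
def isVal : Term → Bool
  | var _ => true
  | lam _ => true
  | _ => false

/-- Shifting of de Bruijn indices: add `d` to all indices `≥ c`. -/
def shift (d c : ℕ) : Term → Term
  | var n => if n < c then var n else var (n + d)
  | lam M => lam (shift d (c + 1) M)
  | app M N => app (shift d c M) (shift d c N)
  | choice M N => choice (shift d c M) (shift d c N)

/-- Capture-avoiding substitution `M[j := N]` (the variable `j` is consumed and
higher indices are decremented, as in a β-step). -/
def subst : Term → ℕ → Term → Term
  | var n, j, N => if n = j then shift j 0 N else if j < n then var (n - 1) else var n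
  | lam M, j, N => lam (subst M (j + 1) N)
  | app M L, j, N => app (subst M j N) (subst L j N)
  | choice M L, j, N => choice (subst M j N) (subst L j N)

/-- All free indices are `< n`. -/
def closedUnder : Term → ℕ → Prop
  | var m, n => m < n
  | lam M, n => closedUnder M (n + 1)
  | app M N, n => closedUnder M n ∧ closedUnder N n
  | choice M N, n => closedUnder M n ∧ closedUnder N n

/-- Closed terms: no free variables. -/
def Closed (M : Term) : Prop := closedUnder M 0

end Term

/-- (Sub)distributions are represented as functions from terms into `ℝ≥0∞`;
genuine distributions (`IsDist`) are supported on values and have mass `≤ 1`. -/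
abbrev PDist := Term → ℝ≥0∞

/-- The sum (total mass) `Σ𝒟` of a distribution. -/
noncomputable def dsum (D : PDist) : ℝ≥0∞ := ∑' M, D M

/-- The support of a distribution. -/
def dsupp (D : PDist) : Set Term := {M | D M ≠ 0}

/-- The everywhere-zero distribution `∅`. -/
noncomputable def dzero : PDist := fun _ => 0

/-- The Dirac distribution `{V^1}`. -/
noncomputable def dirac (V : Term) : PDist := fun M => if M = V then 1 else 0

/-- Being a genuine (sub)probability distribution: supported on values, with
total mass at most one. -/
def IsDist (D : PDist) : Prop := (∀ M, D M ≠ 0 → M.IsValue) ∧ dsum D ≤ 1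

/-- Call-by-value reduction `↦v`, relating a term to the (equiprobable) finite
sequence of its possible reducts. -/
inductive RedV : Term → List Term → Prop
  | beta {M V : Term} : V.IsValue → RedV (.app (.lam M) V) [M.subst 0 V]
  | choice {V W : Term} : V.IsValue → W.IsValue → RedV (.choice V W) [V, W]
  | appL {M N : Term} {Ls : List Term} :
      RedV M Ls → RedV (.app M N) (Ls.map (fun L => .app L N))
  | appR {V M : Term} {Ns : List Term} :
      V.IsValue → RedV M Ns → RedV (.app V M) (Ns.map (fun L => .app V L))
  | choiceL {M N : Term} {Ls : List Term} :
      RedV M Ls → RedV (.choice M N) (Ls.map (fun L => .choice L N))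
  | choiceR {V M : Term} {Ns : List Term} :
      V.IsValue → RedV M Ns → RedV (.choice V M) (Ns.map (fun L => .choice V L))

/-- Call-by-name reduction `↦n`. -/
inductive RedN : Term → List Term → Prop
  | beta {M N : Term} : RedN (.app (.lam M) N) [M.subst 0 N]
  | choice {M N : Term} : RedN (.choice M N) [M, N]
  | appL {M N : Term} {Ls : List Term} :
      RedN M Ls → RedN (.app M N) (Ls.map (fun L => .app L N))

/-- The inductive small-step convergence relation `⇒`, parametric in the
underlying reduction relation: any term evaluates to `∅`; a value `V`
evaluates to `{V^1}`; and if `M ↦ N₁,…,Nₙ` and `Nᵢ ⇒ 𝒟ᵢ` then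
`M ⇒ Σᵢ (1/n)𝒟ᵢ`. -/
inductive Conv (Red : Term → List Term → Prop) : Term → PDist → Prop
  | bot (M : Term) : Conv Red M dzero
  | val {V : Term} : V.IsValue → Conv Red V (dirac V)
  | step {M : Term} {Ns : List Term} (Ds : Fin Ns.length → PDist) :
      Red M Ns → (∀ i, Conv Red (Ns.get i) (Ds i)) →
      Conv Red M (fun W => (∑ i, Ds i W) / (Ns.length : ℝ≥0∞))

/-- Call-by-value small-step convergence `⇒v`. -/
def SmallV : Term → PDist → Prop := Conv RedV

/-- Call-by-name small-step convergence `⇒n`. -/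
def SmallN : Term → PDist → Prop := Conv RedN

/-- The small-step semantics `⟦M⟧`: the pointwise supremum of all distributions
derivable for `M`. -/
noncomputable def semOf (S : Term → PDist → Prop) (M : Term) : PDist :=
  fun W => ⨆ (D : PDist) (_ : S M D), D W

/-- Call-by-value small-step semantics `⟦M⟧v`. -/
noncomputable def semV : Term → PDist := semOf SmallV

/-- Call-by-name small-step semantics `⟦M⟧n`. -/
noncomputable def semN : Term → PDist := semOf SmallN

/-- One-step unfolding of the divergence inference system: a value diverges
with probability `0`; if `M ↦ N₁,…,Nₙ` and `Nᵢ` diverges with probability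
`pᵢ`, then `M` diverges with probability `Σᵢ (1/n)pᵢ`. -/
def DivStep (Red : Term → List Term → Prop) (R : Term → ℝ≥0∞ → Prop)
    (M : Term) (p : ℝ≥0∞) : Prop :=
  (M.IsValue ∧ p = 0) ∨
    ∃ (Ns : List Term) (ps : Fin Ns.length → ℝ≥0∞),
      Red M Ns ∧ (∀ i, R (Ns.get i) (ps i)) ∧ p = (∑ i, ps i) / (Ns.length : ℝ≥0∞)

/-- The coinductively-defined divergence relation `⇓div`: the union of all
consistent relations between terms and probabilities in `[0,1]`. -/
def Diverges (Red : Term → List Term → Prop) (M : Term) (p : ℝ≥0∞) : Prop :=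
  ∃ R : Term → ℝ≥0∞ → Prop,
    (∀ N q, R N q → q ≤ 1 ∧ DivStep Red R N q) ∧ R M p

/-- Call-by-value divergence `⇓div`. -/
def DivV : Term → ℝ≥0∞ → Prop := Diverges RedV

/-- Call-by-name divergence `⇓div,n`. -/
def DivN : Term → ℝ≥0∞ → Prop := Diverges RedN

/-- One-step unfolding of the call-by-value big-step inference system. -/
def BigVStep (R : Term → PDist → Prop) (M : Term) (D : PDist) : Prop :=
  (M.IsValue ∧ D = dirac M) ∨
  (∃ (N L : Term) (E F : PDist) (G : Term → Term → PDist),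
      M = .app N L ∧ R N E ∧ R L F ∧
      (∀ P V, E (.lam P) ≠ 0 → V.IsValue → F V ≠ 0 → R (P.subst 0 V) (G P V)) ∧
      D = fun W => ∑' (P : Term), ∑' (V : Term), E (.lam P) * F V * G P V W) ∨
  (∃ (N L : Term) (E F : PDist),
      M = .choice N L ∧ R N E ∧ R L F ∧
      D = fun W => (E W * dsum F + F W * dsum E) / 2)

/-- The coinductive call-by-value big-step relation `⇓v`: the union of all
consistent relations between terms and distributions. -/
def BigV (M : Term) (D : PDist) : Prop :=
  ∃ R : Term → PDist → Prop,
    (∀ N E, R N E → IsDist E ∧ BigVStep R N E) ∧ R M D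

/-- One-step unfolding of the call-by-name big-step inference system. -/
def BigNStep (R : Term → PDist → Prop) (M : Term) (D : PDist) : Prop :=
  (M.IsValue ∧ D = dirac M) ∨
  (∃ (N L : Term) (E : PDist) (F : Term → PDist),
      M = .app N L ∧ R N E ∧
      (∀ P, E (.lam P) ≠ 0 → R (P.subst 0 L) (F P)) ∧
      D = fun W => ∑' (P : Term), E (.lam P) * F P W) ∨
  (∃ (N L : Term) (E F : PDist),
      M = .choice N L ∧ R N E ∧ R L F ∧ D = fun W => (E W + F W) / 2)

/-- The coinductive call-by-name big-step relation `⇓n`. -/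
def BigN (M : Term) (D : PDist) : Prop :=
  ∃ R : Term → PDist → Prop,
    (∀ N E, R N E → IsDist E ∧ BigNStep R N E) ∧ R M D

/-- Big-step semantics `⟪M⟫`: the pointwise infimum of all distributions
derivable for `M` in a big-step system. -/
noncomputable def bigSemOf (B : Term → PDist → Prop) (M : Term) : PDist :=
  fun W => ⨅ (D : PDist) (_ : B M D), D W

theorem redN_not_value {M : Term} {Ns : List Term} (h : RedN M Ns) (hv : M.IsValue) : False := by
  cases hv <;> cases h

theorem redN_det {M : Term} {Ns Ns' : List Term} (h : RedN M Ns) (h' : RedN M Ns') :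
    Ns = Ns' := by
  induction h generalizing Ns' with
  | beta =>
    cases h' with
    | beta => rfl
    | appL h => cases h
  | choice => cases h'; rfl
  | appL h ih =>
    cases h' with
    | beta => cases h
    | appL h2 => rw [ih h2]

theorem conv_dir {M : Term} {D D' : PDist} (h : SmallN M D) (h' : SmallN M D') :
    ∃ D'', SmallN M D'' ∧ D ≤ D'' ∧ D' ≤ D'' := by
  unfold SmallN at *
  induction h generalizing D' with
  | bot M => exact ⟨D', h', fun W => by simp [dzero], le_rfl⟩
  | @val V hv =>
    refine ⟨dirac V, .val hv, le_rfl, ?_⟩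
    cases h' with
    | bot => intro W; simp [dzero]
    | val => exact le_rfl
    | step Ds hr => exact (redN_not_value hr hv).elim
  | @step M Ns Ds hr hc ih =>
    cases h' with
    | bot => exact ⟨_, .step Ds hr hc, le_rfl, fun W => by simp [dzero]⟩
    | val hv => exact (redN_not_value hr hv).elim
    | @step _ Ns' Ds' hr' hc' =>
      obtain rfl := redN_det hr hr'
      choose Ds'' h1 h2 h3 using fun i => ih i (hc' i)
      refine ⟨_, .step Ds'' hr h1, fun W => ?_, fun W => ?_⟩
      · exact ENNReal.div_le_div_right (Finset.sum_le_sum fun i _ => h2 i W) _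
      · exact ENNReal.div_le_div_right (Finset.sum_le_sum fun i _ => h3 i W) _

theorem le_semN {M : Term} {D : PDist} (h : SmallN M D) (W : Term) : D W ≤ semN M W :=
  le_iSup₂_of_le D h le_rfl

theorem semN_le {M W : Term} {c : ℝ≥0∞} (h : ∀ D, SmallN M D → D W ≤ c) : semN M W ≤ c :=
  iSup₂_le h

theorem semN_eq (M W : Term) : semN M W = ⨆ D : {D // SmallN M D}, D.1 W := by
  rw [iSup_subtype]; rfl

/-- A weighted sum of the semantics is bounded as soon as those of its approximants are. -/
theorem tsum_semN_le {α : Type} (M : Term) (g : α → Term) (c : α → ℝ≥0∞) (b : ℝ≥0∞)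
    (h : ∀ D, SmallN M D → ∑' a, D (g a) * c a ≤ b) : ∑' a, semN M (g a) * c a ≤ b := by
  rw [ENNReal.tsum_eq_iSup_sum]
  refine iSup_le fun s => ?_
  simp_rw [semN_eq, ENNReal.iSup_mul]
  rw [ENNReal.finsetSum_iSup]
  · exact iSup_le fun D => (ENNReal.sum_le_tsum s).trans (h D.1 D.2)
  · rintro ⟨D, hD⟩ ⟨D', hD'⟩
    obtain ⟨E, hE, h1, h2⟩ := conv_dir hD hD'
    exact ⟨⟨E, hE⟩, fun a => ⟨mul_le_mul_left (h1 _) _, mul_le_mul_left (h2 _) _⟩⟩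

theorem sum_semN_le {n : ℕ} (Ns : Fin n → Term) (W : Term) (b : ℝ≥0∞)
    (h : ∀ Ds : Fin n → PDist, (∀ i, SmallN (Ns i) (Ds i)) → ∑ i, Ds i W ≤ b) :
    ∑ i, semN (Ns i) W ≤ b := by
  have key : ∀ i, semN (Ns i) W = ⨆ k : (∀ i, {D // SmallN (Ns i) D}), (k i).1 W := by
    intro i
    apply le_antisymm
    · refine semN_le fun D hD => ?_
      classical
      let k : ∀ i, {D // SmallN (Ns i) D} :=
        Function.update (fun i => ⟨dzero, Conv.bot _⟩) i ⟨D, hD⟩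
      refine le_iSup_of_le k ?_
      simp [k]
    · exact iSup_le fun k => le_semN (k i).2 W
  simp_rw [key]
  rw [ENNReal.finsetSum_iSup]
  · exact iSup_le fun k => h _ fun i => (k i).2
  · intro k k'
    choose E hE h1 h2 using fun i => conv_dir (k i).2 (k' i).2
    exact ⟨fun i => ⟨E i, hE i⟩, fun i => ⟨h1 i W, h2 i W⟩⟩

theorem semN_value {V : Term} (hv : V.IsValue) : semN V = dirac V := by
  funext W
  apply le_antisymm
  · refine semN_le fun D hD => ?_
    cases hD with
    | bot => simp [dzero]
    | val => exact le_rfl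
    | step Ds hr => exact (redN_not_value hr hv).elim
  · exact le_semN (Conv.val hv) W

theorem semN_step_fin {M : Term} {Ns : List Term} (h : RedN M Ns) (W : Term) :
    semN M W = (∑ i, semN (Ns.get i) W) / (Ns.length : ℝ≥0∞) := by
  apply le_antisymm
  · refine semN_le fun D hD => ?_
    cases hD with
    | bot => simp [dzero]
    | val hv => exact (redN_not_value h hv).elim
    | @step _ Ns' Ds hr hc =>
      obtain rfl := redN_det h hr
      exact ENNReal.div_le_div_right (Finset.sum_le_sum fun i _ => le_semN (hc i) W) _
  · have hne : (Ns.length : ℝ≥0∞) ≠ 0 := by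
      have : Ns ≠ [] := by
        clear W
        induction h with
        | beta => simp
        | choice => simp
        | appL _ ih => simpa using ih
      simpa using this
    refine ENNReal.div_le_of_le_mul (sum_semN_le _ _ _ fun Ds hDs => ?_)
    have := le_semN (Conv.step Ds h hDs) W
    rwa [ENNReal.div_le_iff hne (by simp)] at this

theorem sum_get (Ns : List Term) (f : Term → ℝ≥0∞) :
    ∑ i, f (Ns.get i) = (Ns.map f).sum := by
  simp [← Fin.sum_univ_fun_getElem]

theorem semN_beta (M N W : Term) : semN (.app (.lam M) N) W = semN (M.subst 0 N) W := by
  rw [semN_step_fin RedN.beta]; simp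

theorem semN_choice (M N W : Term) : semN (.choice M N) W = (semN M W + semN N W) / 2 := by
  rw [semN_step_fin RedN.choice, sum_get _ (fun N => semN N W)]; simp

theorem semN_appL {N : Term} {Ls : List Term} (h : RedN N Ls) (L W : Term) :
    semN (.app N L) W = (∑ i, semN (.app (Ls.get i) L) W) / (Ls.length : ℝ≥0∞) := by
  rw [semN_step_fin (RedN.appL (N := L) h), sum_get _ (fun N => semN N W),
    sum_get _ (fun N => semN (.app N L) W)]
  simp [Function.comp_def]

theorem avg_swap {n : ℕ} (E : Fin n → Term → ℝ≥0∞) (c : Term → ℝ≥0∞) :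
    ∑' P, (∑ i, E i P) / (n : ℝ≥0∞) * c P = (∑ i, ∑' P, E i P * c P) / (n : ℝ≥0∞) := by
  rw [← Summable.tsum_finsetSum (fun i _ => ENNReal.summable), div_eq_mul_inv,
    ← ENNReal.tsum_mul_right]
  refine tsum_congr fun P => ?_
  rw [← Finset.sum_mul, div_eq_mul_inv]
  ring

/-- The right-hand side of the big-step application rule. -/
noncomputable def bigApp (W : Term) : Term → ℝ≥0∞
  | .app N L => ∑' P, semN N (.lam P) * semN (P.subst 0 L) W
  | M => semN M W

theorem conv_le_bigApp {M : Term} {D : PDist} (h : SmallN M D) (W : Term) :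
    D W ≤ bigApp W M := by
  unfold SmallN at h
  induction h with
  | bot => simp [dzero]
  | @val V hv =>
    cases hv with
    | var n => exact le_semN (Conv.val (.var n)) W
    | lam M => exact le_semN (Conv.val (.lam M)) W
  | @step M Ns Ds hr hc ih =>
    cases hr with
    | @beta M N =>
      refine le_trans ?_ (ENNReal.le_tsum M)
      rw [semN_value (.lam M)]
      have := le_semN (hc 0) W
      simpa [dirac] using this
    | choice =>
      exact le_semN (Conv.step Ds .choice hc) W
    | @appL N L Ls hN =>
      refine (ENNReal.div_le_div_right (Finset.sum_le_sum fun i _ => ih i) _).trans ?_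
      rw [sum_get _ (bigApp W)]
      simp only [bigApp, semN_step_fin hN]
      rw [avg_swap (fun i P => semN (Ls.get i) (.lam P)),
        sum_get _ (fun N => ∑' P, semN N (.lam P) * semN (P.subst 0 L) W)]
      simp [Function.comp_def, bigApp]

theorem conv_app_le {N : Term} {E : PDist} (h : SmallN N E) (L W : Term) :
    ∑' P, E (.lam P) * semN (P.subst 0 L) W ≤ semN (.app N L) W := by
  unfold SmallN at h
  induction h with
  | bot => simp [dzero]
  | @val V hv =>
    cases hv with
    | var n => simp [dirac]
    | lam M =>
      rw [semN_beta, tsum_eq_single M]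
      · simp [dirac]
      · intro P hP; simp [dirac, hP]
  | @step M Ns Ds hr hc ih =>
    rw [avg_swap (fun i P => Ds i (.lam P)), semN_appL hr]
    exact ENNReal.div_le_div_right (Finset.sum_le_sum fun i _ => ih i) _

theorem semN_app (N L W : Term) :
    semN (.app N L) W = ∑' P, semN N (.lam P) * semN (P.subst 0 L) W := by
  apply le_antisymm
  · exact semN_le fun D hD => conv_le_bigApp hD W
  · exact tsum_semN_le N _ _ _ fun D hD => conv_app_le hD L W

theorem conv_isDist {M : Term} {D : PDist} (h : SmallN M D) : IsDist D := by
  unfold SmallN at h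
  induction h with
  | bot => simp [IsDist, dzero, dsum]
  | @val V hv =>
    constructor
    · intro M hM
      by_cases h : M = V
      · exact h ▸ hv
      · simp [dirac, h] at hM
    · simp [dsum, dirac]
  | @step M Ns Ds hr hc ih =>
    constructor
    · intro W hW
      by_contra hn
      apply hW
      have : ∀ i, Ds i W = 0 := fun i => by
        by_contra h
        exact hn ((ih i).1 W h)
      simp [this]
    · have := avg_swap Ds (fun _ => 1)
      simp only [mul_one] at this
      unfold dsum
      rw [this]
      calc _ ≤ (∑ i : Fin Ns.length, (1 : ℝ≥0∞)) / Ns.length :=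
            ENNReal.div_le_div_right (Finset.sum_le_sum fun i _ => (ih i).2) _
        _ ≤ 1 := by simp [ENNReal.div_self_le_one]

theorem semN_isDist (M : Term) : IsDist (semN M) := by
  constructor
  · intro W hW
    by_contra hn
    apply hW
    refine le_antisymm (semN_le fun D hD => ?_) zero_le
    by_contra h
    exact hn ((conv_isDist hD).1 W (fun h0 => h h0.le))
  · have := tsum_semN_le M id (fun _ => 1) 1 fun D hD => by
      simpa [dsum] using (conv_isDist hD).2
    simpa [dsum] using this

/-- the call-by-name small-step semantics of `M` is itself
derivable in the coinductive call-by-name big-step semantics. -/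
theorem bigN_semN (M : Term) (hM : M.Closed) :
    BigN M (semN M) := by
  refine ⟨fun N E => E = semN N, ?_, rfl⟩
  rintro N E rfl
  refine ⟨semN_isDist N, ?_⟩
  cases N with
  | var n => exact Or.inl ⟨.var n, semN_value (.var n)⟩
  | lam P => exact Or.inl ⟨.lam P, semN_value (.lam P)⟩
  | app N L =>
    exact Or.inr (Or.inl ⟨N, L, semN N, fun P => semN (P.subst 0 L), rfl, rfl,
      fun _ _ => rfl, funext fun W => semN_app N L W⟩)
  | choice N L =>
    exact Or.inr (Or.inr ⟨N, L, semN N, semN L, rfl, rfl, rfl,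
      funext fun W => semN_choice N L W⟩)
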